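/- Suppose f ∈ H¹(I,ℝⁿ) with derivative f', and let u be a minimizer of E_ε over H¹(I,ℝⁿ), with derivative u'. Then u' has an absolutely continuous representative vanishing at both endpoints a and b, the vector field x ↦ u'(x)/|u'(x)|_ε + ε² u'(x) is absolutely continuous on [a,b], and for almost every x ∈ I its derivative equals (1/λ)(u(x) − f(x)); that is, u is a strong solution of the Euler–Lagrange system (1/λ)(u − f) = (u'/|u'|_ε)' + ε² u'' on I with Neumann boundary conditions u'(a) = u'(b) = 0. -/

import Mathlib

open MeasureTheory Set Filter
open scoped ENNReal

noncomputable section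

/-- Square-integrability of `w` on the set `S`. -/
def SqIntOn {n : ℕ} (w : ℝ → EuclideanSpace ℝ (Fin n)) (S : Set ℝ) : Prop :=
  MeasureTheory.IntegrableOn (fun x => ‖w x‖ ^ 2) S

/-- `w` belongs to `H¹(I, ℝⁿ)` with (weak) derivative `w'`: it is continuous on `[a,b]`,
`w'` is square-integrable on `I = Ioo a b`, and the fundamental theorem of calculus holds. -/
def InH1 {n : ℕ} (a b : ℝ) (w w' : ℝ → EuclideanSpace ℝ (Fin n)) : Prop :=
  ContinuousOn w (Set.Icc a b) ∧
  MeasureTheory.IntegrableOn (fun x => ‖w' x‖ ^ 2) (Set.Ioo a b) ∧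
  ∀ x ∈ Set.Icc a b, ∀ y ∈ Set.Icc a b, w y - w x = ∫ t in x..y, w' t

/-- The regularized energy `E_ε` evaluated at `w ∈ H¹` with derivative `w'`. -/
def regEnergy {n : ℕ} (lam ε a b : ℝ) (f w w' : ℝ → EuclideanSpace ℝ (Fin n)) : ℝ :=
  ∫ x in Set.Ioo a b, ((1 / (2 * lam)) * ‖w x - f x‖ ^ 2
    + Real.sqrt (‖w' x‖ ^ 2 + ε ^ 2) + (ε ^ 2 / 2) * ‖w' x‖ ^ 2)

/-- `u` (with derivative `u'`) minimizes `E_ε` over `H¹(I, ℝⁿ)`. -/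
def IsMinimizerEps {n : ℕ} (lam ε a b : ℝ) (f u u' : ℝ → EuclideanSpace ℝ (Fin n)) : Prop :=
  InH1 a b u u' ∧ ∀ v v' : ℝ → EuclideanSpace ℝ (Fin n), InH1 a b v v' →
    regEnergy lam ε a b f u u' ≤ regEnergy lam ε a b f v v'

section aux

variable {n : ℕ}

/-- The gradient field. -/
def Gf (ε : ℝ) (p : EuclideanSpace ℝ (Fin n)) : EuclideanSpace ℝ (Fin n) :=
  (Real.sqrt (‖p‖ ^ 2 + ε ^ 2))⁻¹ • p + ε ^ 2 • p

lemma sqrt_upper {ε : ℝ} (hε : 0 < ε) (p q : EuclideanSpace ℝ (Fin n)) :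
    Real.sqrt (‖p + q‖ ^ 2 + ε ^ 2) ≤ Real.sqrt (‖p‖ ^ 2 + ε ^ 2)
      + (Real.sqrt (‖p‖ ^ 2 + ε ^ 2))⁻¹ * inner ℝ p q + (1 / (2 * ε)) * ‖q‖ ^ 2 := by
  have hs2 := Real.sq_sqrt (show 0 ≤ ‖p‖ ^ 2 + ε ^ 2 by positivity)
  have hr2 := Real.sq_sqrt (show 0 ≤ ‖p + q‖ ^ 2 + ε ^ 2 by positivity)
  have hse : ε ≤ Real.sqrt (‖p‖ ^ 2 + ε ^ 2) := Real.le_sqrt_of_sq_le (by nlinarith [sq_nonneg ‖p‖])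
  rw [norm_add_sq_real] at hr2
  rw [norm_add_sq_real]
  set s := Real.sqrt (‖p‖ ^ 2 + ε ^ 2)
  set r := Real.sqrt (‖p‖ ^ 2 + 2 * inner ℝ p q + ‖q‖ ^ 2 + ε ^ 2)
  have hs : 0 < s := hε.trans_le hse
  have h1 : r ≤ s + s⁻¹ * inner ℝ p q + (1 / (2 * s)) * ‖q‖ ^ 2 := by
    have : s + s⁻¹ * inner ℝ p q + (1 / (2 * s)) * ‖q‖ ^ 2 - r = (r - s) ^ 2 / (2 * s) := by
      field_simp
      nlinarith
    have h2 : 0 ≤ (r - s) ^ 2 / (2 * s) := by positivity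
    linarith
  have h3 : (1 / (2 * s)) * ‖q‖ ^ 2 ≤ (1 / (2 * ε)) * ‖q‖ ^ 2 := by gcongr
  linarith

lemma sqrt_tangent {ε : ℝ} (hε : 0 < ε) (p q : EuclideanSpace ℝ (Fin n)) :
    (Real.sqrt (‖p‖ ^ 2 + ε ^ 2))⁻¹ * inner ℝ p (q - p) ≤
      Real.sqrt (‖q‖ ^ 2 + ε ^ 2) - Real.sqrt (‖p‖ ^ 2 + ε ^ 2) := by
  have hs2 := Real.sq_sqrt (show 0 ≤ ‖p‖ ^ 2 + ε ^ 2 by positivity)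
  have hr2 := Real.sq_sqrt (show 0 ≤ ‖q‖ ^ 2 + ε ^ 2 by positivity)
  have hs : 0 < Real.sqrt (‖p‖ ^ 2 + ε ^ 2) := by positivity
  have hr : 0 < Real.sqrt (‖q‖ ^ 2 + ε ^ 2) := by positivity
  set s := Real.sqrt (‖p‖ ^ 2 + ε ^ 2)
  set r := Real.sqrt (‖q‖ ^ 2 + ε ^ 2)
  have hcs := real_inner_le_norm p q
  have key : ‖p‖ * ‖q‖ + ε ^ 2 ≤ s * r := by
    refine (sq_le_sq₀ (by positivity) (by positivity)).1 ?_
    rw [mul_pow, hs2, hr2]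
    nlinarith [sq_nonneg (ε * (‖p‖ - ‖q‖))]
  rw [inner_sub_right, real_inner_self_eq_norm_sq, inv_mul_le_iff₀ hs]
  nlinarith

lemma Gf_mono {ε : ℝ} (hε : 0 < ε) (p q : EuclideanSpace ℝ (Fin n)) :
    ε ^ 2 * ‖p - q‖ ^ 2 ≤ inner ℝ (Gf ε p - Gf ε q) (p - q) := by
  have h1 := sqrt_tangent hε p q
  have h2 := sqrt_tangent hε q p
  have e : inner ℝ (Gf ε p - Gf ε q) (p - q) =
    ε ^ 2 * ‖p - q‖ ^ 2 - (Real.sqrt (‖p‖ ^ 2 + ε ^ 2))⁻¹ * inner ℝ p (q - p)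
      - (Real.sqrt (‖q‖ ^ 2 + ε ^ 2))⁻¹ * inner ℝ q (p - q) := by
    rw [← real_inner_self_eq_norm_sq]
    simp only [Gf, inner_sub_left, inner_sub_right, inner_add_left, inner_smul_left]
    simp only [real_inner_comm p q, conj_trivial]
    ring
  linarith

lemma Gf_expand {ε : ℝ} (hε : 0 < ε) (p q : EuclideanSpace ℝ (Fin n)) :
    ‖p - q‖ ≤ (ε ^ 2)⁻¹ * ‖Gf ε p - Gf ε q‖ := by
  have h := (Gf_mono hε p q).trans (real_inner_le_norm _ _)
  rw [le_inv_mul_iff₀ (by positivity)]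
  rcases (norm_nonneg (p - q)).eq_or_lt with h0 | h0
  · rw [← h0]; simp
  · nlinarith

lemma Gf_surj {ε : ℝ} (hε : 0 < ε) (y : EuclideanSpace ℝ (Fin n)) : ∃ p, Gf ε p = y := by
  by_cases hy : y = 0
  · exact ⟨0, by simp [Gf, hy]⟩
  have hy' : 0 < ‖y‖ := norm_pos_iff.2 hy
  have hc : ContinuousOn (fun t : ℝ => ((Real.sqrt (t ^ 2 + ε ^ 2))⁻¹ + ε ^ 2) * t)
      (Icc 0 (‖y‖ / ε ^ 2)) := by
    apply Continuous.continuousOn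
    have : ∀ t : ℝ, Real.sqrt (t ^ 2 + ε ^ 2) ≠ 0 := fun t => by positivity
    fun_prop (disch := assumption)
  have := intermediate_value_Icc (by positivity) hc
  obtain ⟨t, ht, hty⟩ := this (show ‖y‖ ∈ _ from ⟨by simp, by
    have : ε ^ 2 * (‖y‖ / ε ^ 2) = ‖y‖ := by field_simp
    rw [add_mul, this]
    have : 0 ≤ (Real.sqrt ((‖y‖ / ε ^ 2) ^ 2 + ε ^ 2))⁻¹ * (‖y‖ / ε ^ 2) := by positivity
    linarith⟩)
  refine ⟨(t / ‖y‖) • y, ?_⟩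
  have hn : ‖(t / ‖y‖) • y‖ = t := by
    rw [norm_smul, Real.norm_of_nonneg (div_nonneg ht.1 hy'.le)]; field_simp
  dsimp only at hty
  rw [Gf, hn, ← add_smul, smul_smul, ← mul_div_assoc, hty, div_self hy'.ne', one_smul]

lemma Gf_cont {ε : ℝ} (hε : 0 < ε) : Continuous (Gf (n := n) ε) := by
  unfold Gf
  have : ∀ p : EuclideanSpace ℝ (Fin n), Real.sqrt (‖p‖ ^ 2 + ε ^ 2) ≠ 0 := fun t => by positivity
  fun_prop (disch := assumption)

lemma Gf_norm {ε : ℝ} (hε : 0 < ε) (p : EuclideanSpace ℝ (Fin n)) :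
    ‖Gf ε p‖ ≤ (ε⁻¹ + ε ^ 2) * ‖p‖ := by
  rw [Gf, ← add_smul, norm_smul, Real.norm_of_nonneg (by positivity)]
  gcongr
  exact Real.le_sqrt_of_sq_le (by nlinarith [sq_nonneg ‖p‖])

lemma ibp_scalar {a b : ℝ} {k g : ℝ → ℝ} (hk : IntervalIntegrable k volume a b)
    (hg : IntervalIntegrable g volume a b) :
    ∫ x in a..b, (k x * (∫ t in a..x, g t) + (∫ t in a..x, k t) * g x) =
      (∫ t in a..b, k t) * (∫ t in a..b, g t) := by
  have h := AbsolutelyContinuousOnInterval.integral_deriv_mul_eq_sub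
    (hk.absolutelyContinuousOnInterval_intervalIntegral (c := a) left_mem_uIcc)
    (hg.absolutelyContinuousOnInterval_intervalIntegral (c := a) left_mem_uIcc)
  simp only [intervalIntegral.integral_same, mul_zero, sub_zero] at h
  rw [← h]
  apply intervalIntegral.integral_congr_ae
  filter_upwards [hk.ae_hasDerivAt_integral, hg.ae_hasDerivAt_integral] with x h1 h2 hx
  have hx := uIoc_subset_uIcc hx
  rw [(h1 hx a left_mem_uIcc).deriv, (h2 hx a left_mem_uIcc).deriv]

lemma lip_ftc {v : ℝ → EuclideanSpace ℝ (Fin n)} {K : NNReal} (hv : LipschitzWith K v) :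
    ∃ v'' : ℝ → EuclideanSpace ℝ (Fin n), ∀ x y, IntervalIntegrable v'' volume x y ∧
      v y - v x = ∫ t in x..y, v'' t := by
  have hl : ∀ i x y, AbsolutelyContinuousOnInterval (fun t => v t i) x y := fun i x y => by
    have : LipschitzWith K (fun t => v t i) := by
      refine LipschitzWith.of_dist_le_mul fun s t => ?_
      refine le_trans ?_ (hv.dist_le_mul s t)
      rw [dist_eq_norm, dist_eq_norm]
      exact PiLp.norm_apply_le (v s - v t) i
    exact this.lipschitzOnWith.absolutelyContinuousOnInterval
  refine ⟨fun t => WithLp.toLp 2 (fun i => deriv (fun t => v t i) t), fun x y => ?_⟩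
  have hi : IntervalIntegrable (fun t => (WithLp.toLp 2 (fun i => deriv (fun t => v t i) t) :
      EuclideanSpace ℝ (Fin n))) volume x y := by
    rw [intervalIntegrable_iff]
    refine Integrable.of_eval_piLp fun i => ?_
    exact intervalIntegrable_iff.1 (hl i x y).intervalIntegrable_deriv
  refine ⟨hi, ?_⟩
  ext i
  have := (EuclideanSpace.proj (𝕜 := ℝ) i : EuclideanSpace ℝ (Fin n) →L[ℝ] ℝ).intervalIntegral_comp_comm hi
  refine Eq.trans ?_ this
  exact (hl i x y).integral_deriv_eq_sub.symm

lemma ibp_vec {a b : ℝ} {k g : ℝ → EuclideanSpace ℝ (Fin n)} (hk : IntervalIntegrable k volume a b)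
    (hg : IntervalIntegrable g volume a b) :
    ∫ x in a..b, (inner ℝ (k x) (∫ t in a..x, g t) + inner ℝ (∫ t in a..x, k t) (g x)) =
      inner ℝ (∫ t in a..b, k t) (∫ t in a..b, g t) := by
  have comp : ∀ {w : ℝ → EuclideanSpace ℝ (Fin n)}, IntervalIntegrable w volume a b → ∀ i,
      IntervalIntegrable (fun t => w t i) volume a b := fun hw i => by
    rw [intervalIntegrable_iff] at hw ⊢
    exact Integrable.eval_piLp hw i
  have ev : ∀ {w : ℝ → EuclideanSpace ℝ (Fin n)}, IntervalIntegrable w volume a b →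
      ∀ x ∈ uIcc a b, ∀ i, (∫ t in a..x, w t) i = ∫ t in a..x, w t i := fun {w} hw x hx i => by
    have := (EuclideanSpace.proj (𝕜 := ℝ) i : EuclideanSpace ℝ (Fin n) →L[ℝ] ℝ).intervalIntegral_comp_comm
      (hw.mono_set (uIcc_subset_uIcc_left hx))
    exact this.symm
  have e1 : ∫ x in a..b, (inner ℝ (k x) (∫ t in a..x, g t) + inner ℝ (∫ t in a..x, k t) (g x)) =
     ∫ x in a..b, ∑ i, (k x i * (∫ t in a..x, g t i) + (∫ t in a..x, k t i) * g x i) := by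
    apply intervalIntegral.integral_congr
    intro x hx
    simp only [PiLp.inner_apply, ← Finset.sum_add_distrib]
    refine Finset.sum_congr rfl fun i _ => ?_
    rw [ev hk x hx, ev hg x hx]
    simp only [RCLike.inner_apply, conj_trivial]
    ring
  rw [e1, intervalIntegral.integral_finsetSum]
  · simp only [PiLp.inner_apply]
    refine Finset.sum_congr rfl fun i _ => ?_
    rw [ibp_scalar (comp hk i) (comp hg i), ev hk b right_mem_uIcc, ev hg b right_mem_uIcc]
    simp only [RCLike.inner_apply, conj_trivial]
    ring
  · intro i _
    exact ((comp hk i).mul_continuousOn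
      (intervalIntegral.continuousOn_primitive_interval (by
        simpa [intervalIntegrable_iff'] using comp hg i))).add
      ((comp hg i).continuousOn_mul (intervalIntegral.continuousOn_primitive_interval (by
        simpa [intervalIntegrable_iff'] using comp hk i)))

lemma memLp_of_contOn {a b : ℝ} {w : ℝ → EuclideanSpace ℝ (Fin n)} (hw : ContinuousOn w (Icc a b)) :
    MemLp w 2 (volume.restrict (Ioo a b)) := by
  obtain ⟨C, hC⟩ := isCompact_Icc.exists_bound_of_continuousOn hw
  refine MemLp.of_bound ((hw.mono Ioo_subset_Icc_self).aestronglyMeasurable measurableSet_Ioo) C ?_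
  filter_upwards [ae_restrict_mem measurableSet_Ioo] with x hx
  exact hC x (Ioo_subset_Icc_self hx)

lemma sq_int {a b : ℝ} {w : ℝ → EuclideanSpace ℝ (Fin n)}
    (hw : MemLp w 2 (volume.restrict (Ioo a b))) :
    Integrable (fun x => ‖w x‖ ^ 2) (volume.restrict (Ioo a b)) :=
  (memLp_two_iff_integrable_sq_norm hw.1).1 hw

lemma inner_int {a b : ℝ} {w z : ℝ → EuclideanSpace ℝ (Fin n)}
    (hw : MemLp w 2 (volume.restrict (Ioo a b))) (hz : MemLp z 2 (volume.restrict (Ioo a b))) :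
    Integrable (fun x => inner ℝ (w x) (z x)) (volume.restrict (Ioo a b)) := by
  refine ((sq_int hw).add (sq_int hz)).mono' (hw.1.inner hz.1) (ae_of_all _ fun x => ?_)
  have := norm_inner_le_norm (𝕜 := ℝ) (w x) (z x)
  simp only [Pi.add_apply]
  nlinarith [sq_nonneg (‖w x‖ - ‖z x‖), sq_nonneg (‖w x‖ + ‖z x‖)]

lemma sqrt_int {a b ε : ℝ} {w : ℝ → EuclideanSpace ℝ (Fin n)}
    (hw : Integrable (fun x => ‖w x‖ ^ 2) (volume.restrict (Ioo a b))) :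
    Integrable (fun x => Real.sqrt (‖w x‖ ^ 2 + ε ^ 2)) (volume.restrict (Ioo a b)) := by
  have h1 : Integrable (fun x => ‖w x‖ ^ 2 + (ε ^ 2 + 1)) (volume.restrict (Ioo a b)) :=
    hw.add (integrable_const _)
  refine h1.mono' (Real.continuous_sqrt.comp_aestronglyMeasurable
    (hw.1.add aestronglyMeasurable_const)) (ae_of_all _ fun x => ?_)
  rw [Real.norm_of_nonneg (Real.sqrt_nonneg _)]
  refine Real.sqrt_le_iff.2 ⟨by positivity, ?_⟩
  nlinarith [sq_nonneg ‖w x‖, sq_nonneg ε, sq_nonneg (‖w x‖ ^ 2 + ε ^ 2)]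

lemma en_int {a b lam ε : ℝ} {g w : ℝ → EuclideanSpace ℝ (Fin n)}
    (hg : MemLp g 2 (volume.restrict (Ioo a b)))
    (hw : Integrable (fun x => ‖w x‖ ^ 2) (volume.restrict (Ioo a b))) :
    Integrable (fun x => (1 / (2 * lam)) * ‖g x‖ ^ 2
    + Real.sqrt (‖w x‖ ^ 2 + ε ^ 2) + (ε ^ 2 / 2) * ‖w x‖ ^ 2) (volume.restrict (Ioo a b)) :=
  (((sq_int hg).const_mul _).add (sqrt_int hw)).add (hw.const_mul _)

lemma min_meas {a b lam ε : ℝ} (hab : a < b) (hε : 0 < ε)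
    {f u u' : ℝ → EuclideanSpace ℝ (Fin n)} (hf : ContinuousOn f (Icc a b))
    (hu : IsMinimizerEps lam ε a b f u u') :
    AEStronglyMeasurable u' (volume.restrict (Ioo a b)) := by
  by_contra hm
  obtain ⟨⟨hc, hi, hftc⟩, hmin⟩ := hu
  have hn : ¬ IntervalIntegrable u' volume a b := fun h => hm
    (((intervalIntegrable_iff_integrableOn_Ioc_of_le hab.le).1 h).mono_set Ioo_subset_Ioc_self).1
  have ha : a ∈ Icc a b := left_mem_Icc.2 hab.le
  have hb : b ∈ Icc a b := right_mem_Icc.2 hab.le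
  have hconst : ∀ x ∈ Icc a b, u x = u a := by
    intro x hx
    by_cases h1 : IntervalIntegrable u' volume a x
    · have h2 : ¬ IntervalIntegrable u' volume x b := fun h => hn (h1.trans h)
      have e1 := hftc x hx b hb
      have e2 := hftc a ha b hb
      rw [intervalIntegral.integral_undef h2, sub_eq_zero] at e1
      rw [intervalIntegral.integral_undef hn, sub_eq_zero] at e2
      rw [← e1, e2]
    · have e1 := hftc a ha x hx
      rwa [intervalIntegral.integral_undef h1, sub_eq_zero] at e1
  have hle := hmin u (fun _ => 0) ⟨hc, by simp, fun x hx y hy => by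
    simp [hconst x hx, hconst y hy]⟩
  have hg : MemLp (fun x => u x - f x) 2 (volume.restrict (Ioo a b)) := memLp_of_contOn (hc.sub hf)
  have i1 := en_int (lam := lam) (ε := ε) hg hi
  have i2 := en_int (lam := lam) (ε := ε) (w := fun _ => 0) hg (by simp)
  simp only [regEnergy] at hle
  have h0 : 0 ≤ᵐ[volume.restrict (Ioo a b)] (fun x => ((1 / (2 * lam)) * ‖u x - f x‖ ^ 2
    + Real.sqrt (‖u' x‖ ^ 2 + ε ^ 2) + (ε ^ 2 / 2) * ‖u' x‖ ^ 2) - ((1 / (2 * lam)) * ‖u x - f x‖ ^ 2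
    + Real.sqrt (‖(0 : EuclideanSpace ℝ (Fin n))‖ ^ 2 + ε ^ 2) + (ε ^ 2 / 2) * ‖(0 : EuclideanSpace ℝ (Fin n))‖ ^ 2)) := by
    refine ae_of_all _ fun x => ?_
    have : Real.sqrt (‖(0 : EuclideanSpace ℝ (Fin n))‖ ^ 2 + ε ^ 2) ≤ Real.sqrt (‖u' x‖ ^ 2 + ε ^ 2) := by
      gcongr; simp
    have h3 : 0 ≤ (ε ^ 2 / 2) * ‖u' x‖ ^ 2 := by positivity
    simp only [Pi.zero_apply, norm_zero, ne_eq, OfNat.ofNat_ne_zero, not_false_eq_true, zero_pow, zero_add, mul_zero, add_zero] at this ⊢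
    linarith
  have hz := (integral_eq_zero_iff_of_nonneg_ae h0 (i1.sub i2)).1 (le_antisymm (by
    rw [integral_sub i1 i2]; exact sub_nonpos.2 hle) (integral_nonneg_of_ae h0))
  apply hm
  refine (aestronglyMeasurable_const (b := (0 : EuclideanSpace ℝ (Fin n)))).congr ?_
  filter_upwards [hz] with x hx
  have : Real.sqrt (‖(0 : EuclideanSpace ℝ (Fin n))‖ ^ 2 + ε ^ 2) ≤ Real.sqrt (‖u' x‖ ^ 2 + ε ^ 2) := by
    gcongr; simp
  simp only [Pi.zero_apply, norm_zero, ne_eq, OfNat.ofNat_ne_zero, not_false_eq_true, zero_pow, zero_add, mul_zero, add_zero] at this hx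
  have h3 : (ε ^ 2 / 2) * ‖u' x‖ ^ 2 ≤ 0 := by linarith
  have h4 : 0 < ε ^ 2 / 2 := by positivity
  have h5 : ‖u' x‖ ^ 2 = 0 := le_antisymm (by nlinarith) (sq_nonneg _)
  exact (norm_eq_zero.1 (pow_eq_zero_iff two_ne_zero |>.1 h5)).symm

lemma first_var {a b lam ε : ℝ} (hab : a < b) (hlam : 0 < lam) (hε : 0 < ε)
    {f u u' : ℝ → EuclideanSpace ℝ (Fin n)} (hf : ContinuousOn f (Icc a b))
    (hu : IsMinimizerEps lam ε a b f u u') (hu' : MemLp u' 2 (volume.restrict (Ioo a b)))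
    {g : ℝ → EuclideanSpace ℝ (Fin n)} (c : EuclideanSpace ℝ (Fin n))
    (hg : MemLp g 2 (volume.restrict (Ioo a b))) :
    ∫ x in Ioo a b, (inner ℝ ((1 / lam) • (u x - f x)) (c + ∫ t in a..x, g t)
      + inner ℝ (Gf ε (u' x)) (g x)) = 0 := by
  obtain ⟨⟨hc, hi, hftc⟩, hmin⟩ := hu
  have toInt : ∀ {w : ℝ → EuclideanSpace ℝ (Fin n)}, MemLp w 2 (volume.restrict (Ioo a b)) →
      ∀ x ∈ Icc a b, ∀ y ∈ Icc a b, IntervalIntegrable w volume x y := by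
    intro w hw x hx y hy
    have h1 : IntegrableOn w (Icc a b) := by
      rw [integrableOn_Icc_iff_integrableOn_Ioo]
      exact hw.integrable one_le_two
    exact (h1.mono_set (uIcc_subset_Icc hx hy)).intervalIntegrable
  have ha : a ∈ Icc a b := left_mem_Icc.2 hab.le
  have hb : b ∈ Icc a b := right_mem_Icc.2 hab.le
  set η : ℝ → EuclideanSpace ℝ (Fin n) := fun x => c + ∫ t in a..x, g t with hη
  have hηc : ContinuousOn η (Icc a b) := by
    have := intervalIntegral.continuousOn_primitive_interval
      ((intervalIntegrable_iff' (by simp)).1 (toInt hg a ha b hb))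
    rw [uIcc_of_le hab.le] at this
    exact continuousOn_const.add this
  have hηL := memLp_of_contOn hηc
  have hgL : MemLp (fun x => u x - f x) 2 (volume.restrict (Ioo a b)) := memLp_of_contOn (hc.sub hf)
  have hGL : MemLp (fun x => Gf ε (u' x)) 2 (volume.restrict (Ioo a b)) :=
    hu'.of_le_mul ((Gf_cont hε).comp_aestronglyMeasurable hu'.1) (ae_of_all _ fun x => Gf_norm hε (u' x))
  have iL : Integrable (fun x => inner ℝ ((1 / lam) • (u x - f x)) (η x)
      + inner ℝ (Gf ε (u' x)) (g x)) (volume.restrict (Ioo a b)) :=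
    (inner_int (hgL.const_smul (1 / lam)) hηL).add (inner_int hGL hg)
  have iQ : Integrable (fun x => (1 / (2 * lam)) * ‖η x‖ ^ 2 + (1 / (2 * ε) + ε ^ 2 / 2) * ‖g x‖ ^ 2)
      (volume.restrict (Ioo a b)) := ((sq_int hηL).const_mul _).add ((sq_int hg).const_mul _)
  set L := ∫ x in Ioo a b, (inner ℝ ((1 / lam) • (u x - f x)) (η x) + inner ℝ (Gf ε (u' x)) (g x))
  set Q := ∫ x in Ioo a b, ((1 / (2 * lam)) * ‖η x‖ ^ 2 + (1 / (2 * ε) + ε ^ 2 / 2) * ‖g x‖ ^ 2)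
    with hQ
  have hQ0 : 0 ≤ Q := integral_nonneg fun x => by positivity
  have key : ∀ t : ℝ, 0 ≤ t * L + t ^ 2 * Q := by
    intro t
    have hvL : MemLp (fun x => u' x + t • g x) 2 (volume.restrict (Ioo a b)) :=
      hu'.add (hg.const_smul t)
    have hvc : ContinuousOn (fun x => u x + t • η x) (Icc a b) := hc.add (hηc.const_smul t)
    have h1 := hmin (fun x => u x + t • η x) (fun x => u' x + t • g x) ⟨hvc, sq_int hvL, by
      intro x hx y hy
      have i2 : IntervalIntegrable (fun x => t • g x) volume x y := (toInt hg x hx y hy).smul t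
      rw [intervalIntegral.integral_add (toInt hu' x hx y hy) i2, intervalIntegral.integral_smul, ← hftc x hx y hy,
        ← intervalIntegral.integral_interval_sub_left (toInt hg a ha y hy) (toInt hg a ha x hx)]
      simp only [hη]
      module⟩
    have h2 : regEnergy lam ε a b f (fun x => u x + t • η x) (fun x => u' x + t • g x)
        ≤ regEnergy lam ε a b f u u' + (t * L + t ^ 2 * Q) := by
      simp only [regEnergy]
      rw [← integral_const_mul, ← integral_const_mul,
        ← integral_add (iL.const_mul t) (iQ.const_mul _)]
      have iS : Integrable (fun x => t * (inner ℝ ((1 / lam) • (u x - f x)) (η x)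
          + inner ℝ (Gf ε (u' x)) (g x)) + t ^ 2 * ((1 / (2 * lam)) * ‖η x‖ ^ 2
          + (1 / (2 * ε) + ε ^ 2 / 2) * ‖g x‖ ^ 2)) (volume.restrict (Ioo a b)) :=
        (iL.const_mul t).add (iQ.const_mul _)
      rw [← integral_add (en_int hgL hi) iS]
      refine integral_mono (en_int (memLp_of_contOn (hvc.sub hf)) (sq_int hvL))
        ((en_int hgL hi).add iS) fun x => ?_
      have hs := sqrt_upper hε (u' x) (t • g x)
      have e1 : ‖u x + t • η x - f x‖ ^ 2 = ‖u x - f x‖ ^ 2 + 2 * t * inner ℝ (u x - f x) (η x)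
          + t ^ 2 * ‖η x‖ ^ 2 := by
        rw [show u x + t • η x - f x = (u x - f x) + t • η x by abel, norm_add_sq_real,
          inner_smul_right, norm_smul, mul_pow, Real.norm_eq_abs, sq_abs]
        ring
      have e2 : ‖u' x + t • g x‖ ^ 2 = ‖u' x‖ ^ 2 + 2 * t * inner ℝ (u' x) (g x)
          + t ^ 2 * ‖g x‖ ^ 2 := by
        rw [norm_add_sq_real,
          inner_smul_right, norm_smul, mul_pow, Real.norm_eq_abs, sq_abs]
        ring
      have e3 : inner ℝ (Gf ε (u' x)) (g x) = (Real.sqrt (‖u' x‖ ^ 2 + ε ^ 2))⁻¹ * inner ℝ (u' x) (g x)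
          + ε ^ 2 * inner ℝ (u' x) (g x) := by
        simp [Gf, inner_add_left, inner_smul_left]
      rw [inner_smul_right, norm_smul, mul_pow, Real.norm_eq_abs, sq_abs] at hs
      dsimp only
      rw [e1, e3, inner_smul_left]
      refine (add_le_add_left (add_le_add_right hs _) _).trans (le_of_eq ?_)
      rw [e2]
      simp only [conj_trivial]
      field_simp
      ring
    linarith
  change L = 0
  by_contra hL
  have h1 := key (-L / (2 * (Q + 1)))
  have h2 : -L / (2 * (Q + 1)) * L + (-L / (2 * (Q + 1))) ^ 2 * Q
      = - (L ^ 2 * (Q + 2)) / (4 * (Q + 1) ^ 2) := by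
    field_simp
    ring
  rw [h2] at h1
  have h3 : 0 < L ^ 2 := by positivity
  have h4 : 0 < (L ^ 2 * (Q + 2)) / (4 * (Q + 1) ^ 2) := by positivity
  rw [neg_div] at h1
  linarith

end aux

/-- the minimizer of `E_ε` is a strong solution of the Euler–Lagrange system
`(1/λ)(u − f) = (u'/|u'|_ε)' + ε² u''` on `I` with Neumann boundary conditions
`u'(a) = u'(b) = 0`: `u'` has an absolutely continuous representative `v` vanishing at the
endpoints, the field `x ↦ v(x)/|v(x)|_ε + ε² v(x)` is absolutely continuous on `[a,b]`, and
its derivative equals `(1/λ)(u − f)` a.e. on `I`. -/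
theorem minimizerEps_strong_solution_eulerLagrange
    {n : ℕ} (hn : 1 ≤ n) (a b : ℝ) (hab : a < b) (lam : ℝ) (hlam : 0 < lam)
    (ε : ℝ) (hε : 0 < ε)
    (f f' : ℝ → EuclideanSpace ℝ (Fin n)) (hf : InH1 a b f f')
    (u u' : ℝ → EuclideanSpace ℝ (Fin n)) (hu : IsMinimizerEps lam ε a b f u u') :
    ∃ v v'' h : ℝ → EuclideanSpace ℝ (Fin n),
      -- `v` is an a.e. representative of `u'` on `I`
      (∀ᵐ x ∂(MeasureTheory.volume.restrict (Set.Ioo a b)), v x = u' x) ∧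
      -- `v` is absolutely continuous on `[a,b]` with derivative `v''`
      MeasureTheory.IntegrableOn v'' (Set.Icc a b) ∧
      (∀ x ∈ Set.Icc a b, ∀ y ∈ Set.Icc a b, v y - v x = ∫ t in x..y, v'' t) ∧
      -- Neumann boundary conditions
      v a = 0 ∧ v b = 0 ∧
      -- the field `v/|v|_ε + ε² v` is absolutely continuous on `[a,b]` with derivative `h`
      MeasureTheory.IntegrableOn h (Set.Icc a b) ∧
      (∀ x ∈ Set.Icc a b, ∀ y ∈ Set.Icc a b,
        ((Real.sqrt (‖v y‖ ^ 2 + ε ^ 2))⁻¹ • v y + ε ^ 2 • v y)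
          - ((Real.sqrt (‖v x‖ ^ 2 + ε ^ 2))⁻¹ • v x + ε ^ 2 • v x) = ∫ t in x..y, h t) ∧
      -- the Euler–Lagrange equation holds a.e. on `I`
      (∀ᵐ x ∂(MeasureTheory.volume.restrict (Set.Ioo a b)),
        h x = (1 / lam) • (u x - f x)) := by
  classical
  have hfc := hf.1
  have huc := hu.1.1
  have hu' : MemLp u' 2 (volume.restrict (Ioo a b)) :=
    (memLp_two_iff_integrable_sq_norm (min_meas hab hε hfc hu)).2 hu.1.2.1
  have hIoo : ∀ (w : ℝ → ℝ), ∫ x in Ioo a b, w x = ∫ x in a..b, w x := fun w => by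
    rw [intervalIntegral.integral_of_le hab.le, integral_Ioc_eq_integral_Ioo]
  have hkc0 : ContinuousOn (fun x => (1 / lam) • (u x - f x)) (Icc a b) :=
    (huc.sub hfc).const_smul (1 / lam)
  obtain ⟨C, hC⟩ := isCompact_Icc.exists_bound_of_continuousOn hkc0
  set k : ℝ → EuclideanSpace ℝ (Fin n) :=
    IccExtend hab.le ((Icc a b).restrict fun x => (1 / lam) • (u x - f x)) with hk
  have hkc : Continuous k := (continuousOn_iff_continuous_restrict.1 hkc0).Icc_extend'
  have hkeq : ∀ x ∈ Icc a b, k x = (1 / lam) • (u x - f x) := fun x hx => by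
    rw [hk, IccExtend_of_mem _ _ hx]; rfl
  have hkC : ∀ x, ‖k x‖ ≤ C := fun x => hC _ (projIcc a b hab.le x).2
  have hki : ∀ x y, IntervalIntegrable k volume x y := fun x y => hkc.intervalIntegrable x y
  set H : ℝ → EuclideanSpace ℝ (Fin n) := fun x => ∫ t in a..x, k t with hH
  have hHsub : ∀ x y, H y - H x = ∫ t in x..y, k t := fun x y =>
    intervalIntegral.integral_interval_sub_left (hki _ _) (hki _ _)
  have hHc : Continuous H := intervalIntegral.continuous_primitive hki a
  have hC0 : 0 ≤ C := (norm_nonneg _).trans (hkC a)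
  have hHlip : ∀ x y, ‖H x - H y‖ ≤ C * |x - y| := fun x y => by
    rw [hHsub]
    exact intervalIntegral.norm_integral_le_of_norm_le_const fun t _ => hkC t
  have hFV : ∀ (c : EuclideanSpace ℝ (Fin n)) {g : ℝ → EuclideanSpace ℝ (Fin n)},
      MemLp g 2 (volume.restrict (Ioo a b)) →
      ∫ x in Ioo a b, (inner ℝ (k x) (c + ∫ t in a..x, g t) + inner ℝ (Gf ε (u' x)) (g x)) = 0 := by
    intro c g hg
    rw [← first_var hab hlam hε hfc hu hu' c hg]
    refine setIntegral_congr_fun measurableSet_Ioo fun x hx => ?_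
    simp only [hkeq x (Ioo_subset_Icc_self hx)]
  have hHb : H b = 0 := by
    have h := hFV (H b) (g := fun _ => 0) MemLp.zero
    simp only [intervalIntegral.integral_zero, add_zero, inner_zero_right] at h
    rw [hIoo] at h
    have h2 := ((innerSL ℝ) (H b)).intervalIntegral_comp_comm (hki a b)
    simp only [innerSL_apply_apply] at h2
    simp only [real_inner_comm (H b)] at h
    rw [h] at h2
    exact inner_self_eq_zero.1 h2.symm
  have hHa : H a = 0 := by simp [hH]
  have hGL : MemLp (fun x => Gf ε (u' x)) 2 (volume.restrict (Ioo a b)) :=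
    hu'.of_le_mul ((Gf_cont hε).comp_aestronglyMeasurable hu'.1)
      (ae_of_all _ fun x => Gf_norm hε (u' x))
  have hHL : MemLp H 2 (volume.restrict (Ioo a b)) := memLp_of_contOn hHc.continuousOn
  have hg : MemLp (fun x => Gf ε (u' x) - H x) 2 (volume.restrict (Ioo a b)) := hGL.sub hHL
  have hgi : IntervalIntegrable (fun x => Gf ε (u' x) - H x) volume a b := by
    rw [intervalIntegrable_iff_integrableOn_Ioo_of_le hab.le]
    exact hg.integrable one_le_two
  have hae : ∀ᵐ x ∂(volume.restrict (Ioo a b)), Gf ε (u' x) = H x := by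
    have h1 := hFV 0 hg
    have h2 := ibp_vec (hki a b) hgi
    rw [show ∫ t in a..b, k t = 0 from hHb, inner_zero_left, ← hIoo] at h2
    have hPc : ContinuousOn (fun x => ∫ t in a..x, (Gf ε (u' t) - H t)) (Icc a b) := by
      have := intervalIntegral.continuousOn_primitive_interval ((intervalIntegrable_iff' (by simp)).1 hgi)
      rwa [uIcc_of_le hab.le] at this
    have iP := inner_int (memLp_of_contOn hkc.continuousOn) (memLp_of_contOn hPc)
    simp only [zero_add] at h1
    rw [integral_add iP (inner_int hGL hg)] at h1
    rw [integral_add iP (inner_int hHL hg)] at h2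
    have h3 : ∫ x in Ioo a b, ‖Gf ε (u' x) - H x‖ ^ 2 = 0 := by
      have : ∀ x, ‖Gf ε (u' x) - H x‖ ^ 2 = inner ℝ (Gf ε (u' x)) (Gf ε (u' x) - H x)
          - inner ℝ (H x) (Gf ε (u' x) - H x) := fun x => by
        rw [← inner_sub_left, real_inner_self_eq_norm_sq]
      simp only [this]
      rw [integral_sub (inner_int hGL hg) (inner_int hHL hg)]
      linarith
    rw [integral_eq_zero_iff_of_nonneg (fun x => by positivity) (sq_int hg)] at h3
    filter_upwards [h3] with x hx
    have hx : ‖Gf ε (u' x) - H x‖ ^ 2 = 0 := hx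
    exact sub_eq_zero.1 (norm_eq_zero.1 (pow_eq_zero_iff two_ne_zero |>.1 hx))
  choose K hK using fun y : EuclideanSpace ℝ (Fin n) => Gf_surj hε y
  have hinj : ∀ p q : EuclideanSpace ℝ (Fin n), Gf ε p = Gf ε q → p = q := fun p q h => by
    have := Gf_expand hε p q
    rw [h, sub_self, norm_zero, mul_zero] at this
    exact sub_eq_zero.1 (norm_le_zero_iff.1 this)
  have hK0 : K 0 = 0 := hinj _ _ (by rw [hK]; simp [Gf])
  have hlip : LipschitzWith ((ε ^ 2)⁻¹ * C).toNNReal (fun x => K (H x)) := by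
    refine LipschitzWith.of_dist_le_mul fun x y => ?_
    rw [Real.coe_toNNReal _ (by positivity), dist_eq_norm, Real.dist_eq, mul_assoc]
    refine (Gf_expand hε _ _).trans ?_
    rw [hK, hK]
    gcongr
    exact hHlip x y
  obtain ⟨v'', hv''⟩ := lip_ftc hlip
  refine ⟨fun x => K (H x), v'', k, ?_, ?_, fun x _ y _ => (hv'' x y).2, ?_, ?_, ?_, ?_, ?_⟩
  · filter_upwards [hae] with x hx
    exact hinj _ _ (by rw [hK, hx])
  · exact (intervalIntegrable_iff_integrableOn_Icc_of_le hab.le).1 (hv'' a b).1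
  · simp only [hHa, hK0]
  · simp only [hHb, hK0]
  · exact (intervalIntegrable_iff_integrableOn_Icc_of_le hab.le).1 (hki a b)
  · intro x _ y _
    have := hHsub x y
    rw [← hK (H x), ← hK (H y)] at this
    exact this
  · filter_upwards [ae_restrict_mem measurableSet_Ioo] with x hx
    exact hkeq x (Ioo_subset_Icc_self hx)
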